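/- Let G = GP(Γ, 𝒢) be a non-degenerate graph product over a finite simple graph Γ with diam(Γ) ≥ 2. Then G admits a non-elementary acylindrical action on a simplicial tree if and only if G is not virtually cyclic and there exist two vertices a, b ∈ V(Γ) at edge distance at least 2 such that the full subgroup on link(a) ∩ link(b) is finite. -/

import Mathlib

/-- An action of a group `G` by simplicial isometries (automorphisms) on a simplicial
tree, i.e. a connected acyclic simple graph, with the natural edge metric. -/
structure TreeAction (G : Type*) [Group G] where
  V : Type
  T : SimpleGraph V
  isTree : T.IsTree
  act : G →* (T ≃g T)

namespace TreeAction

variable {G : Type*} [Group G] (A : TreeAction G)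

/-- The action fixes a point of the tree (the action is elliptic). -/
def FixesPoint : Prop := ∃ x : A.V, ∀ g : G, A.act g x = x

/-- An element is elliptic if it fixes a point of the tree. -/
def Elliptic (g : G) : Prop := ∃ x : A.V, A.act g x = x

/-- The action has bounded orbits. -/
def BoundedOrbits : Prop := ∃ (x : A.V) (B : ℕ), ∀ g : G, A.T.dist x (A.act g x) ≤ B

/-- `(k, C)`-acylindricity: the pointwise stabiliser of any geodesic edge path of length
at least `k` (equivalently, in a tree, the common stabiliser of two points at distance
at least `k`) has at most `C` elements. -/
def KCAcylindrical (k C : ℕ) : Prop :=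
  ∀ x y : A.V, k ≤ A.T.dist x y →
    {g : G | A.act g x = x ∧ A.act g y = y}.Finite ∧
      {g : G | A.act g x = x ∧ A.act g y = y}.ncard ≤ C

/-- An action on a tree is acylindrical if it is `(k, C)`-acylindrical for some `k ≥ 0`,
`C ≥ 1`. -/
def Acylindrical : Prop := ∃ k C : ℕ, 1 ≤ C ∧ A.KCAcylindrical k C

/-- Bowditch's definition of acylindricity for the action on the tree. -/
def BowditchAcylindrical : Prop :=
  ∀ ε : ℕ, ∃ R N : ℕ, ∀ x y : A.V, R ≤ A.T.dist x y →
    {g : G | A.T.dist x (A.act g x) ≤ ε ∧ A.T.dist y (A.act g y) ≤ ε}.Finite ∧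
      {g : G | A.T.dist x (A.act g x) ≤ ε ∧ A.T.dist y (A.act g y) ≤ ε}.ncard ≤ N

end TreeAction

/-- A group is virtually cyclic if it has a cyclic subgroup of finite index. -/
def IsVirtuallyCyclic (G : Type*) [Group G] : Prop :=
  ∃ H : Subgroup G, H.FiniteIndex ∧ IsCyclic H

namespace TreeAction

variable {G : Type*} [Group G] (A : TreeAction G)

/-- The action is non-elementary: unbounded orbits and the group is not virtually
cyclic. -/
def NonElementary : Prop := ¬ A.BoundedOrbits ∧ ¬ IsVirtuallyCyclic G

/-- The action fixes a bi-infinite geodesic line setwise. -/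
def FixesLine : Prop :=
  ∃ ℓ : ℤ → A.V, (∀ m n : ℤ, (A.T.dist (ℓ m) (ℓ n) : ℤ) = |m - n|) ∧
    ∀ g : G, (fun v => A.act g v) '' Set.range ℓ = Set.range ℓ

end TreeAction

/-- A group is acylindrically arboreal if it admits a non-elementary acylindrical
action on a simplicial tree. -/
def AcylindricallyArboreal (G : Type*) [Group G] : Prop :=
  ∃ A : TreeAction G, A.Acylindrical ∧ A.NonElementary

/-- Property (FA⁻): every action on a simplicial tree either fixes a point or fixes a
bi-infinite geodesic setwise. -/
def PropertyFAMinus (G : Type*) [Group G] : Prop :=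
  ∀ A : TreeAction G, A.FixesPoint ∨ A.FixesLine

section GraphProduct

variable {V : Type} (Γ : SimpleGraph V) (Gv : V → Type) [∀ v, Group (Gv v)]

/-- The commutation relators defining a graph product: for each edge `{u, v}` of `Γ`,
the elements of `G_u` commute with the elements of `G_v` inside the free product. -/
def graphProductRels : Set (Monoid.CoprodI Gv) :=
  {x | ∃ (u v : V), Γ.Adj u v ∧ ∃ (a : Gv u) (b : Gv v),
    x = Monoid.CoprodI.of a * Monoid.CoprodI.of b *
      (Monoid.CoprodI.of a)⁻¹ * (Monoid.CoprodI.of b)⁻¹}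

/-- The graph product of the groups `Gv` over the finite simple graph `Γ`: the free
product of the vertex groups modulo commutation of adjacent vertex groups. -/
def GraphProduct : Type :=
  Monoid.CoprodI Gv ⧸ Subgroup.normalClosure (graphProductRels Γ Gv)

instance : Group (GraphProduct Γ Gv) :=
  inferInstanceAs (Group (Monoid.CoprodI Gv ⧸ Subgroup.normalClosure (graphProductRels Γ Gv)))

/-- The canonical map of a vertex group into the graph product. -/
def GraphProduct.of (v : V) : Gv v →* GraphProduct Γ Gv :=
  (QuotientGroup.mk' _).comp Monoid.CoprodI.of

/-- The full subgroup on a set `S` of vertices: the subgroup generated by the vertex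
groups of the vertices in `S`. -/
def GraphProduct.full (S : Set V) : Subgroup (GraphProduct Γ Gv) :=
  ⨆ v ∈ S, (GraphProduct.of Γ Gv v).range

/-- A graph product is non-degenerate if all vertex groups are nontrivial and `Γ` has
more than one vertex. -/
def GraphProduct.NonDegenerate : Prop :=
  (∀ v, Nontrivial (Gv v)) ∧ Nontrivial V

/-- The conjugate `g H g⁻¹` of a subgroup. -/
def conjSubgroup {G : Type*} [Group G] (g : G) (H : Subgroup G) : Subgroup G :=
  H.map (MulAut.conj g).toMonoidHom

/-- Edge distance at least `n` between two vertices of a graph (with the convention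
that vertices in different components are at infinite distance). -/
def SimpleGraph.distAtLeast (n : ℕ) (a b : V) : Prop :=
  a ≠ b ∧ (¬ Γ.Reachable a b ∨ n ≤ Γ.dist a b)

/-- Two vertices are separated (w.r.t. the graph product) if their edge distance is at
least 2 and the full subgroup on the intersection of their links is finite. -/
def GraphProduct.SeparatedPair (a b : V) : Prop :=
  a ≠ b ∧ ¬ Γ.Adj a b ∧
    Finite (GraphProduct.full Γ Gv (Γ.neighborSet a ∩ Γ.neighborSet b))

/-- The graph-theoretic diameter of `Γ` is at least `n`. -/
def SimpleGraph.diamAtLeast (n : ℕ) : Prop := ∃ a b : V, Γ.distAtLeast n a b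

end GraphProduct

/-!
A separated pair `a`, `b` splits the graph product `G` as the amalgamated product of the full
subgroups on `{b}ᶜ` and `{a}ᶜ`. On a path of length three in the Bass–Serre tree, two vertices are
distinct cosets of the first factor or of the second, and so in either type one finds that the
stabilizer of the path lies in a conjugate of the full subgroup on `link b`, respectively `link a`.
Hence it lies in a conjugate of the finite full subgroup on `link a ∩ link b`, and the action is
acylindrical. It is unbounded because neither factor has a conjugate containing `full {a, b}`.

Conversely, suppose that `G` acts acylindrically on a tree and no pair is separated. For nonadjacent
`u` and `v` the subgroup on `{u, v}` commutes with the infinite subgroup on `link u ∩ link v`, and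
in an acylindrical action a subgroup commuting with an infinite subgroup that it meets trivially is
bounded. Adjacent vertex groups commute, so all pairs of vertex groups generate bounded subgroups,
and the Helly property of trees bounds every full subgroup on a finite set of vertices. Since all
the subgroups on `{a, b, v}`, for one fixed nonadjacent pair `a`, `b`, contain the same infinite
subgroup, their fixed points stay within bounded distance of each other, which bounds `G` itself.
-/

namespace TreeMetric

variable {X : Type*} {T : SimpleGraph X}

/-- The vertex `u` lies on a geodesic from `x` to `y`. -/
abbrev Between (T : SimpleGraph X) (x u y : X) : Prop :=
  T.dist x u + T.dist u y = T.dist x y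

theorem exists_between_dist_eq (hT : T.Connected) {x y : X} {t : ℕ} (ht : t ≤ T.dist x y) :
    ∃ u, Between T x u y ∧ T.dist x u = t := by
  obtain ⟨w, hw⟩ := hT.exists_walk_length_eq_dist x y
  have h₁ := SimpleGraph.dist_le (w.take t)
  have h₂ := SimpleGraph.dist_le (w.drop t)
  have h₃ : T.dist x y ≤ T.dist x (w.getVert t) + T.dist (w.getVert t) y := hT.dist_triangle
  rw [SimpleGraph.Walk.take_length] at h₁
  rw [SimpleGraph.Walk.drop_length] at h₂
  exact ⟨w.getVert t, by omega, by omega⟩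

theorem Between.eq_of_dist_eq (hT : T.IsTree) {x y u v : X} (hu : Between T x u y)
    (hv : Between T x v y) (h : T.dist x u = T.dist x v) : u = v := by
  have exists_path : ∀ {u}, Between T x u y → ∃ p : T.Path x y, p.1.getVert (T.dist x u) = u := by
    intro u hu
    obtain ⟨p, hp⟩ := hT.connected.exists_walk_length_eq_dist x u
    obtain ⟨q, hq⟩ := hT.connected.exists_walk_length_eq_dist u y
    refine ⟨⟨p.append q, SimpleGraph.Walk.isPath_of_length_eq_dist _ ?_⟩, ?_⟩
    · rw [SimpleGraph.Walk.length_append, hp, hq, hu]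
    · simp [SimpleGraph.Walk.getVert_append, hp]
  obtain ⟨p, hp⟩ := exists_path hu
  obtain ⟨q, hq⟩ := exists_path hv
  rw [← hp, ← hq, h, (hT.isAcyclic.subsingleton_path x y).elim p q]

theorem Between.of_dist_le (hT : T.IsTree) {x y u v : X} (hu : Between T x u y)
    (hv : Between T x v y) (h : T.dist x u ≤ T.dist x v) : Between T x u v := by
  obtain ⟨w, hw, hxw⟩ := exists_between_dist_eq hT.connected h
  have h₁ : T.dist w y ≤ T.dist w v + T.dist v y := hT.connected.dist_triangle
  have h₂ : T.dist x y ≤ T.dist x w + T.dist w y := hT.connected.dist_triangle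
  rwa [hu.eq_of_dist_eq hT (v := w) (by omega) hxw.symm]

theorem exists_median (hT : T.IsTree) (x y z : X) :
    ∃ m, Between T x m y ∧ Between T y m z ∧ Between T x m z := by
  induction h : T.dist x y generalizing y with
  | zero =>
    obtain rfl := hT.connected.dist_eq_zero_iff.1 h
    exact ⟨x, by simp, by simp, by simp⟩
  | succ n ih =>
    have tri := fun u v w : X ↦ hT.connected.dist_triangle (u := u) (v := v) (w := w)
    obtain ⟨y', hy', hn⟩ :=
      exists_between_dist_eq hT.connected (x := x) (y := y) (t := n) (by omega)
    have hadj : T.Adj y' y := SimpleGraph.dist_eq_one_iff_adj.1 (by omega)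
    obtain ⟨m, hxy, hyz, hxz⟩ := ih y' hn
    rcases hT.dist_eq_dist_add_one_of_adj z hadj with hz | hz
    · obtain rfl | hm := eq_or_ne m y'
      · exact ⟨y, by simp, by simp, by grind only [SimpleGraph.dist_comm]⟩
      -- Otherwise `y` is the next vertex after `y'` on the way to `m`, hence closer to `x`.
      obtain ⟨v, hv, hyv⟩ := exists_between_dist_eq hT.connected (x := y') (y := m) (t := 1)
        (hT.connected.pos_dist_of_ne hm.symm)
      have hvy : v = y := Between.eq_of_dist_eq hT (x := y') (y := z)
        (by have := tri v m z; have := tri y' v z; omega)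
        (by grind only [SimpleGraph.dist_comm]) (by omega)
      grind only [SimpleGraph.dist_comm, tri x m v]
    · have := tri x m y
      have := tri m y' y
      have := tri y m z
      exact ⟨m, by grind only [SimpleGraph.dist_comm], by grind only [SimpleGraph.dist_comm], hxz⟩

theorem exists_between_proj (hT : T.IsTree) (x y z : X) :
    ∃ m, Between T x m y ∧ ∀ u, Between T x u y → Between T z m u := by
  have tri := fun u v w : X ↦ hT.connected.dist_triangle (u := u) (v := v) (w := w)
  obtain ⟨m, hxy, hyz, hxz⟩ := exists_median hT x y z
  refine ⟨m, hxy, fun u hu ↦ ?_⟩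
  rcases le_total (T.dist x u) (T.dist x m) with h | h
  · grind only [SimpleGraph.dist_comm, hu.of_dist_le hT hxy h, tri z m u, tri x u z]
  · grind only [SimpleGraph.dist_comm, hxy.of_dist_le hT hu h, tri z m u, tri y u z]

theorem Between.or_between (hT : T.IsTree) {x y u : X} (hu : Between T x u y) (w : X) :
    Between T x u w ∨ Between T y u w := by
  obtain ⟨m, hxy, hm⟩ := exists_between_proj hT x y w
  have hwx := hm x (by simp)
  have hwy := hm y (by simp)
  have hwu := hm u hu
  rcases le_total (T.dist x u) (T.dist x m) with h | h
  · have := hu.of_dist_le hT hxy h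
    grind only [SimpleGraph.dist_comm]
  · have := hxy.of_dist_le hT hu h
    grind only [SimpleGraph.dist_comm]

theorem even_dist_add_dist_add_dist (hT : T.IsTree) (x y z : X) :
    Even (T.dist x y + T.dist y z + T.dist x z) := by
  obtain ⟨m, hxy, hyz, hxz⟩ := exists_median hT x y z
  exact ⟨T.dist x m + T.dist m y + T.dist m z, by grind [SimpleGraph.dist_comm]⟩

end TreeMetric

namespace TreeAction

open TreeMetric

variable {G : Type*} [Group G] (A : TreeAction G)

instance : MulAction G A.V where
  smul g x := A.act g x
  one_smul x := by change A.act 1 x = x; simp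
  mul_smul g h x := by change A.act (g * h) x = _; rw [map_mul]; rfl

theorem smul_def (g : G) (x : A.V) : g • x = A.act g x := rfl

theorem dist_smul (g : G) (x y : A.V) : A.T.dist (g • x) (g • y) = A.T.dist x y := by
  have dist_smul_le (g : G) (x y : A.V) : A.T.dist (g • x) (g • y) ≤ A.T.dist x y := by
    obtain ⟨w, hw⟩ := A.isTree.connected.exists_walk_length_eq_dist x y
    simpa [hw, smul_def] using SimpleGraph.dist_le (w.map (A.act g).toHom)
  refine le_antisymm (dist_smul_le g x y) ?_
  simpa using dist_smul_le g⁻¹ (g • x) (g • y)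

theorem dist_mul_smul_le (g h : G) (x : A.V) :
    A.T.dist x ((g * h) • x) ≤ A.T.dist x (g • x) + A.T.dist x (h • x) := by
  rw [← A.dist_smul g x (h • x), ← mul_smul]
  exact A.isTree.connected.dist_triangle

theorem dist_pow_smul_le (g : G) (x : A.V) (n : ℕ) :
    A.T.dist x (g ^ n • x) ≤ n * A.T.dist x (g • x) := by
  induction n with
  | zero => simp
  | succ n ih =>
    rw [pow_succ, Nat.succ_mul]
    exact (A.dist_mul_smul_le _ _ _).trans (by gcongr)

theorem dist_inv_smul (g : G) (x y : A.V) : A.T.dist x (g⁻¹ • y) = A.T.dist y (g • x) := by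
  rw [← A.dist_smul g, smul_inv_smul, SimpleGraph.dist_comm]

theorem dist_smul_smul_of_commute {g h : G} (hgh : Commute g h) (x : A.V) :
    A.T.dist (h • x) (g • h • x) = A.T.dist x (g • x) := by
  rw [smul_smul, hgh.eq, mul_smul, A.dist_smul]

theorem even_dist_mul_smul (g h : G) (x : A.V) :
    Even (A.T.dist x ((g * h) • x)) ↔ (Even (A.T.dist x (g • x)) ↔ Even (A.T.dist x (h • x))) := by
  have h := even_dist_add_dist_add_dist A.isTree x (g • x) ((g * h) • x)
  rw [mul_smul, A.dist_smul] at h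
  rw [mul_smul]
  grind

theorem even_dist_smul_iff (g : G) (x y : A.V) :
    Even (A.T.dist x (g • x)) ↔ Even (A.T.dist y (g • y)) := by
  have h₁ := even_dist_add_dist_add_dist A.isTree x y (g • x)
  have h₂ := even_dist_add_dist_add_dist A.isTree y (g • x) (g • y)
  rw [A.dist_smul] at h₂
  grind

/-- The subgroup of the elements that preserve the bipartition of the vertices of the tree. -/
def typePreserving : Subgroup G where
  carrier := {g | ∀ x : A.V, Even (A.T.dist x (g • x))}
  mul_mem' hg hh x := (A.even_dist_mul_smul _ _ x).2 (iff_of_true (hg x) (hh x))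
  one_mem' x := by simp
  inv_mem' hg x := by
    rw [A.dist_inv_smul]
    exact hg x

theorem mem_typePreserving {g : G} (x : A.V) :
    g ∈ A.typePreserving ↔ Even (A.T.dist x (g • x)) :=
  ⟨fun hg ↦ hg x, fun hg y ↦ (A.even_dist_smul_iff g x y).1 hg⟩

variable {A}

theorem stabilizer_inf_le_of_between {x y u : A.V} (hu : Between A.T x u y) :
    MulAction.stabilizer G x ⊓ MulAction.stabilizer G y ≤ MulAction.stabilizer G u := by
  rintro g ⟨hx, hy⟩
  have hxu : A.T.dist x (g • u) = A.T.dist x u := by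
    rw [← A.dist_smul g x u, MulAction.mem_stabilizer_iff.1 hx]
  have huy : A.T.dist (g • u) y = A.T.dist u y := by
    rw [← A.dist_smul g u y, MulAction.mem_stabilizer_iff.1 hy]
  exact Between.eq_of_dist_eq A.isTree (by omega) hu hxu

/-! ### Subgroups with bounded orbits -/

variable (A) in
/-- The subgroup `H` has bounded orbits in the tree. -/
def IsBounded (H : Subgroup G) : Prop :=
  ∃ (x : A.V) (B : ℕ), ∀ h ∈ H, A.T.dist x (h • x) ≤ B

variable (A) in
theorem isBounded_top : A.IsBounded ⊤ ↔ A.BoundedOrbits := by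
  simp only [IsBounded, BoundedOrbits, smul_def, Subgroup.mem_top, forall_const]

theorem IsBounded.exists_forall_dist_smul_le {H : Subgroup G} (hH : A.IsBounded H) (y : A.V) :
    ∃ B : ℕ, ∀ h ∈ H, A.T.dist y (h • y) ≤ B := by
  obtain ⟨x, B, hB⟩ := hH
  refine ⟨A.T.dist y x + (B + A.T.dist x y), fun h hh ↦ ?_⟩
  calc A.T.dist y (h • y)
      ≤ A.T.dist y x + A.T.dist x (h • y) := A.isTree.connected.dist_triangle
    _ ≤ A.T.dist y x + (A.T.dist x (h • x) + A.T.dist (h • x) (h • y)) := by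
        gcongr; exact A.isTree.connected.dist_triangle
    _ ≤ A.T.dist y x + (B + A.T.dist x y) := by rw [A.dist_smul]; gcongr; exact hB h hh

theorem IsBounded.mono {H K : Subgroup G} (hK : A.IsBounded K) (hHK : H ≤ K) : A.IsBounded H :=
  let ⟨x, B, hB⟩ := hK
  ⟨x, B, fun h hh ↦ hB h (hHK hh)⟩

theorem isBounded_of_finite (H : Subgroup G) [Finite H] : A.IsBounded H := by
  obtain ⟨x⟩ := A.isTree.connected.nonempty
  obtain ⟨B, hB⟩ := (Set.finite_range fun h : H ↦ A.T.dist x (h • x)).bddAbove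
  exact ⟨x, B, fun h hh ↦ hB ⟨⟨h, hh⟩, rfl⟩⟩

theorem isBounded_stabilizer (x : A.V) : A.IsBounded (MulAction.stabilizer G x) :=
  ⟨x, 0, fun g hg ↦ by simp [MulAction.mem_stabilizer_iff.1 hg]⟩

theorem IsBounded.sup_of_le_centralizer {H K : Subgroup G} (hH : A.IsBounded H)
    (hK : A.IsBounded K) (hHK : H ≤ Subgroup.centralizer K) : A.IsBounded (H ⊔ K) := by
  obtain ⟨x, B, hB⟩ := hH
  obtain ⟨C, hC⟩ := hK.exists_forall_dist_smul_le x
  have comm (h : H) (k : K) : Commute (H.subtype h) (K.subtype k) :=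
    (Subgroup.mem_centralizer_iff.1 (hHK h.2) k k.2).symm
  refine ⟨x, B + C, fun g hg ↦ ?_⟩
  rw [← H.range_subtype, ← K.range_subtype, ← MonoidHom.noncommCoprod_range _ _ comm] at hg
  obtain ⟨⟨h, k⟩, rfl⟩ := hg
  exact (A.dist_mul_smul_le _ _ _).trans (add_le_add (hB h h.2) (hC k k.2))

theorem IsBounded.exists_forall_dist_smul_le_one {H : Subgroup G} (hH : A.IsBounded H) :
    ∃ z : A.V, ∀ h ∈ H, A.T.dist z (h • z) ≤ 1 := by
  classical
  obtain ⟨x, hx⟩ := hH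
  -- A center of the orbit of `x`: the radius `Nat.find hr` around `z` is minimal.
  have hr : ∃ n z, ∀ h ∈ H, A.T.dist z (h • x) ≤ n := ⟨_, x, hx.choose_spec⟩
  obtain ⟨z, hz⟩ := Nat.find_spec hr
  refine ⟨z, fun h hh ↦ ?_⟩
  by_contra! hlt
  obtain ⟨u, hu, hzu⟩ := exists_between_dist_eq A.isTree.connected hlt.le
  have closer : ∀ k ∈ H, A.T.dist u (k • x) + 1 ≤ Nat.find hr := by
    intro k hk
    have hzk := hz k hk
    have hhk := hz (h⁻¹ * k) (H.mul_mem (H.inv_mem hh) hk)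
    rw [← A.dist_smul h, smul_smul, mul_inv_cancel_left] at hhk
    rcases hu.or_between A.isTree (k • x) with h' | h' <;>
      grind only [SimpleGraph.dist_comm]
  refine Nat.find_min hr (m := Nat.find hr - 1) ?_
    ⟨u, fun k hk ↦ Nat.le_sub_one_of_lt (closer k hk)⟩
  have := closer 1 H.one_mem
  omega

theorem smul_eq_of_mem_typePreserving {g : G} {z : A.V} (hg : g ∈ A.typePreserving)
    (hz : A.T.dist z (g • z) ≤ 1) : g • z = z := by
  rw [eq_comm, ← A.isTree.connected.dist_eq_zero_iff]
  have := hg z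
  grind

theorem IsBounded.exists_le_stabilizer {H : Subgroup G} (hH : A.IsBounded H)
    (htype : H ≤ A.typePreserving) : ∃ z : A.V, H ≤ MulAction.stabilizer G z :=
  let ⟨z, hz⟩ := hH.exists_forall_dist_smul_le_one
  ⟨z, fun h hh ↦ smul_eq_of_mem_typePreserving (htype hh) (hz h hh)⟩

end TreeAction

theorem injective_mul_pow_of_disjoint_zpowers {G : Type*} [Group G] {H : Subgroup G} {g : G}
    (hdisj : Disjoint H (Subgroup.zpowers g)) (hg : ¬ IsOfFinOrder g) :
    Function.Injective fun p : H × ℕ ↦ (p.1 : G) * g ^ p.2 := by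
  rintro ⟨h, j⟩ ⟨h', j'⟩ heq
  have := Subgroup.mul_injective_of_disjoint hdisj
    (a₁ := (h, ⟨g ^ j, Subgroup.npow_mem_zpowers g j⟩))
    (a₂ := (h', ⟨g ^ j', Subgroup.npow_mem_zpowers g j'⟩)) heq
  simp only [Prod.mk.injEq, Subtype.mk.injEq] at this
  exact Prod.ext this.1 (injective_pow_iff_not_isOfFinOrder.2 hg this.2)

namespace TreeAction

open TreeMetric

variable {G : Type*} [Group G] (A : TreeAction G)

/-! ### Elements moving both ends of a long segment a little -/

/-- The signed amount by which `g` moves the middle of the segment from `x` to `y` towards `y`,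
provided that `g` displaces both endpoints by less than half the length of the segment. -/
noncomputable def shift (x y : A.V) (g : G) : ℤ :=
  A.T.dist x (g • y) - A.T.dist x y

variable {A}

theorem abs_shift_le (x y : A.V) (g : G) : |A.shift x y g| ≤ A.T.dist y (g • y) := by
  have h₁ := A.isTree.connected.dist_triangle (u := x) (v := y) (w := g • y)
  have h₂ := A.isTree.connected.dist_triangle (u := x) (v := g • y) (w := y)
  rw [shift, abs_le]
  grind only [SimpleGraph.dist_comm]

theorem between_smul_and_dist_eq_add_shift {x y u : A.V} {r : ℕ} {g : G}
    (hx : A.T.dist x (g • x) ≤ r) (hy : A.T.dist y (g • y) ≤ r) (hu : Between A.T x u y)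
    (hxu : r < A.T.dist x u) (huy : r < A.T.dist u y) :
    Between A.T x (g • u) y ∧ (A.T.dist x (g • u) : ℤ) = A.T.dist x u + A.shift x y g := by
  have hgu : Between A.T (g • x) (g • u) (g • y) := by simpa only [Between, A.dist_smul] using hu
  have hgxu := A.dist_smul g x u
  have hguy := A.dist_smul g u y
  have hx' : Between A.T (g • y) (g • u) x := by
    refine (hgu.or_between A.isTree x).resolve_left fun h ↦ ?_
    grind only [SimpleGraph.dist_comm]
  have hy' : Between A.T x (g • u) y := by
    refine (hx'.or_between A.isTree y).resolve_left fun h ↦ ?_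
    grind only [SimpleGraph.dist_comm]
  exact ⟨hy', by rw [shift]; grind only [SimpleGraph.dist_comm]⟩

theorem smul_eq_smul_of_shift_eq {x y u : A.V} {r : ℕ} {g g' : G}
    (hx : A.T.dist x (g • x) ≤ r) (hy : A.T.dist y (g • y) ≤ r)
    (hx' : A.T.dist x (g' • x) ≤ r) (hy' : A.T.dist y (g' • y) ≤ r)
    (hshift : A.shift x y g = A.shift x y g') (hu : Between A.T x u y)
    (hxu : r < A.T.dist x u) (huy : r < A.T.dist u y) : g • u = g' • u := by
  obtain ⟨hb, hd⟩ := between_smul_and_dist_eq_add_shift hx hy hu hxu huy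
  obtain ⟨hb', hd'⟩ := between_smul_and_dist_eq_add_shift hx' hy' hu hxu huy
  exact hb.eq_of_dist_eq A.isTree hb' (by omega)

theorem shift_mul {x y : A.V} {r : ℕ} {g h : G}
    (hgx : A.T.dist x (g • x) ≤ r) (hgy : A.T.dist y (g • y) ≤ r)
    (hhx : A.T.dist x (h • x) ≤ r) (hhy : A.T.dist y (h • y) ≤ r)
    (hxy : 4 * r + 2 ≤ A.T.dist x y) :
    A.shift x y (g * h) = A.shift x y g + A.shift x y h := by
  obtain ⟨u, hu, hxu⟩ := exists_between_dist_eq A.isTree.connected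
    (x := x) (y := y) (t := 2 * r + 1) (by omega)
  have hmulx := A.dist_mul_smul_le g h x
  have hmuly := A.dist_mul_smul_le g h y
  have hshift := abs_le.1 (abs_shift_le x y h)
  obtain ⟨hhu, hdh⟩ := between_smul_and_dist_eq_add_shift hhx hhy hu (by omega) (by omega)
  have hdg := (between_smul_and_dist_eq_add_shift hgx hgy hhu (by omega) (by omega)).2
  have hdgh := (between_smul_and_dist_eq_add_shift (r := 2 * r) (g := g * h)
    (by omega) (by omega) hu (by omega) (by omega)).2
  rw [smul_smul] at hdg
  omega

theorem shift_eq_zero_of_forall_pow {x y : A.V} {r : ℕ} {g : G}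
    (hx : ∀ n : ℕ, A.T.dist x (g ^ n • x) ≤ r) (hy : ∀ n : ℕ, A.T.dist y (g ^ n • y) ≤ r)
    (hxy : 4 * r + 2 ≤ A.T.dist x y) : A.shift x y g = 0 := by
  have shift_pow (n : ℕ) : A.shift x y (g ^ n) = n * A.shift x y g := by
    induction n with
    | zero => simp [shift]
    | succ n ih =>
      rw [pow_succ, shift_mul (hx n) (hy n) (by simpa using hx 1) (by simpa using hy 1) hxy, ih]
      push_cast
      ring
  have hle : (r + 1) * |A.shift x y g| ≤ r := by
    have := (abs_shift_le x y (g ^ (r + 1))).trans (Nat.cast_le.2 (hy (r + 1)))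
    rwa [shift_pow, abs_mul, Nat.abs_cast, Nat.cast_succ] at this
  by_contra hne
  nlinarith [Int.one_le_abs hne]

/-! ### Commuting subgroups of acylindrical actions -/

theorem KCAcylindrical.card_le_of_shift_eq {k C : ℕ} (hA : A.KCAcylindrical k C) {x y : A.V}
    {r : ℕ} {e : ℤ} (hxy : 2 * r + 2 + k ≤ A.T.dist x y) (F : Finset G)
    (hx : ∀ g ∈ F, A.T.dist x (g • x) ≤ r) (hy : ∀ g ∈ F, A.T.dist y (g • y) ≤ r)
    (hshift : ∀ g ∈ F, A.shift x y g = e) : F.card ≤ C := by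
  classical
  rcases F.eq_empty_or_nonempty with rfl | ⟨g₀, hg₀⟩
  · simp
  obtain ⟨v, hv, hxv⟩ := exists_between_dist_eq A.isTree.connected
    (x := x) (y := y) (t := A.T.dist x y - (r + 1)) (by omega)
  obtain ⟨u, hu, hxu⟩ := exists_between_dist_eq A.isTree.connected
    (x := x) (y := y) (t := r + 1) (by omega)
  have huv : Between A.T x u v := hu.of_dist_le A.isTree hv (by omega)
  obtain ⟨hfin, hcard⟩ := hA u v (by omega)
  have fixes {w : A.V} (hw : Between A.T x w y) (hxw : r < A.T.dist x w) (hwy : r < A.T.dist w y)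
      {g : G} (hg : g ∈ F) : (g₀⁻¹ * g) • w = w := by
    rw [mul_smul, inv_smul_eq_iff]
    exact smul_eq_smul_of_shift_eq (hx g hg) (hy g hg) (hx g₀ hg₀) (hy g₀ hg₀)
      ((hshift g hg).trans (hshift g₀ hg₀).symm) hw hxw hwy
  rw [← Finset.card_image_of_injective F (mul_right_injective g₀⁻¹), ← Set.ncard_coe_finset]
  refine (Set.ncard_le_ncard ?_ hfin).trans hcard
  rw [Finset.coe_image, Set.image_subset_iff]
  exact fun g hg ↦ ⟨fixes hu (by omega) (by omega) hg, fixes hv (by omega) (by omega) hg⟩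

theorem KCAcylindrical.card_le_of_dist_smul_le {k C : ℕ} (hA : A.KCAcylindrical k C) {x y : A.V}
    {r : ℕ} (hxy : 2 * r + 2 + k ≤ A.T.dist x y) (F : Finset G)
    (hx : ∀ g ∈ F, A.T.dist x (g • x) ≤ r) (hy : ∀ g ∈ F, A.T.dist y (g • y) ≤ r) :
    F.card ≤ (2 * r + 1) * C := by
  by_contra! hlt
  have hcard : (Finset.Icc (-r : ℤ) r).card * C < F.card := by
    rwa [Int.card_Icc, show ((r : ℤ) + 1 - -r).toNat = 2 * r + 1 by omega]
  have hmaps (g : G) (hg : g ∈ F) : A.shift x y g ∈ Finset.Icc (-r : ℤ) r :=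
    Finset.mem_Icc.2 <| abs_le.1 <| (abs_shift_le x y g).trans (Nat.cast_le.2 (hy g hg))
  obtain ⟨e, -, he⟩ := Finset.exists_lt_card_fiber_of_mul_lt_card_of_maps_to hmaps hcard
  refine he.not_ge (hA.card_le_of_shift_eq hxy _ (e := e) ?_ ?_ ?_) <;>
    simp +contextual [hx, hy]

theorem KCAcylindrical.exists_not_isBounded_zpowers {k C : ℕ} (hA : A.KCAcylindrical k C)
    {H K : Subgroup G} (hHK : H ≤ Subgroup.centralizer K) (hH : ¬ A.IsBounded H) [Infinite K] :
    ∃ g ∈ K, ¬ A.IsBounded (Subgroup.zpowers g) := by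
  by_contra! hK
  obtain ⟨o⟩ := A.isTree.connected.nonempty
  obtain ⟨F, hF⟩ := Infinite.exists_subset_card_eq K (C + 1)
  choose B hB using fun g : K ↦ (hK g g.2).exists_forall_dist_smul_le o
  obtain ⟨r, hr⟩ := (F.image B).bddAbove
  have hFr (g : K) (hg : g ∈ F) (n : ℕ) : A.T.dist o ((g : G) ^ n • o) ≤ r :=
    (hB g _ (Subgroup.npow_mem_zpowers _ n)).trans (hr (Finset.mem_image_of_mem B hg))
  obtain ⟨h, hh, hlt⟩ : ∃ h ∈ H, 4 * r + 2 + k < A.T.dist o (h • o) := by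
    by_contra! hle
    exact hH ⟨o, _, hle⟩
  have hFr' (g : K) (hg : g ∈ F) (n : ℕ) : A.T.dist (h • o) ((g : G) ^ n • h • o) ≤ r := by
    have hgh : Commute (g : G) h := Subgroup.mem_centralizer_iff.1 (hHK hh) g g.2
    rw [A.dist_smul_smul_of_commute (hgh.pow_left n)]
    exact hFr g hg n
  have hcard := hA.card_le_of_shift_eq (x := o) (y := h • o) (r := r) (e := 0) (by omega)
    (F.map (Function.Embedding.subtype _))
    (by simpa using fun g hgK hg ↦ by simpa using hFr ⟨g, hgK⟩ hg 1)
    (by simpa using fun g hgK hg ↦ by simpa using hFr' ⟨g, hgK⟩ hg 1)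
    (by simpa using fun g hgK hg ↦
      shift_eq_zero_of_forall_pow (hFr ⟨g, hgK⟩ hg) (hFr' ⟨g, hgK⟩ hg) (by omega))
  rw [Finset.card_map] at hcard
  omega

theorem exists_lt_dist_pow_smul {g : G} (hg : ¬ A.IsBounded (Subgroup.zpowers g)) (o : A.V)
    (r : ℕ) : ∃ n : ℕ, r < A.T.dist o (g ^ n • o) := by
  by_contra! hle
  refine hg ⟨o, r, ?_⟩
  rintro _ ⟨n, rfl⟩
  obtain ⟨n, rfl | rfl⟩ := n.eq_nat_or_neg
  · simpa using hle n
  · simpa [A.dist_inv_smul] using hle n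

theorem KCAcylindrical.card_le_of_forall_commute {k C : ℕ} (hA : A.KCAcylindrical k C) {g : G}
    (hg : ¬ A.IsBounded (Subgroup.zpowers g)) (F : Finset G) (hFg : ∀ f ∈ F, Commute f g) {o : A.V}
    {r : ℕ} (hF : ∀ f ∈ F, A.T.dist o (f • o) ≤ r) : F.card ≤ (2 * r + 1) * C := by
  obtain ⟨n, hn⟩ := exists_lt_dist_pow_smul hg o (2 * r + 2 + k)
  refine hA.card_le_of_dist_smul_le hn.le F hF fun f hf ↦ ?_
  rw [A.dist_smul_smul_of_commute ((hFg f hf).pow_right n)]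
  exact hF f hf

theorem not_isOfFinOrder_of_not_isBounded {g : G} (hg : ¬ A.IsBounded (Subgroup.zpowers g)) :
    ¬ IsOfFinOrder g := fun hfin ↦
  have := (finite_zpowers.2 hfin).to_subtype
  hg (isBounded_of_finite _)

theorem KCAcylindrical.finite_of_le_centralizer_of_disjoint_zpowers {k C : ℕ}
    (hA : A.KCAcylindrical k C) {H : Subgroup G} {g : G}
    (hHg : H ≤ Subgroup.centralizer (Subgroup.zpowers g)) (hdisj : Disjoint H (Subgroup.zpowers g))
    (hg : ¬ A.IsBounded (Subgroup.zpowers g)) : Finite H := by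
  classical
  by_contra hH
  rw [not_finite_iff_infinite] at hH
  obtain ⟨o⟩ := A.isTree.connected.nonempty
  have hcomm (h : H) : Commute (h : G) g :=
    (Subgroup.mem_centralizer_iff.1 (hHg h.2) g (Subgroup.mem_zpowers g)).symm
  set D := A.T.dist o (g • o)
  obtain ⟨F, hF⟩ := Infinite.exists_subset_card_eq H (2 * D * C + 1)
  obtain ⟨B, hB⟩ := (F.image fun h ↦ A.T.dist o (h • o)).bddAbove
  -- There are `(2 * D * C + 1) * (n + 1)` products `h * g ^ j` with `h ∈ F` and `j ≤ n`, but
  -- acylindricity allows only `(2 * (B + n * D) + 1) * C` of them.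
  obtain ⟨n, hn⟩ : ∃ n, n = (2 * B + 1) * C := ⟨_, rfl⟩
  let f (p : H × ℕ) : G := p.1 * g ^ p.2
  have hf : Function.Injective f :=
    injective_mul_pow_of_disjoint_zpowers hdisj (not_isOfFinOrder_of_not_isBounded hg)
  have hcard := hA.card_le_of_forall_commute hg
    ((F ×ˢ Finset.range (n + 1)).image f) (o := o) (r := B + n * D)
    (by
      simp only [Finset.forall_mem_image]
      exact fun p _ ↦ (hcomm p.1).mul_left (Commute.pow_self g p.2))
    (by
      simp only [Finset.forall_mem_image, Finset.mem_product, Finset.mem_range_succ_iff]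
      rintro ⟨h, j⟩ ⟨hh, hj⟩
      have hhB : A.T.dist o ((h : G) • o) ≤ B := hB (Finset.mem_image_of_mem _ hh)
      exact (A.dist_mul_smul_le _ _ _).trans <|
        add_le_add hhB ((A.dist_pow_smul_le g o j).trans (Nat.mul_le_mul_right D hj)))
  rw [Finset.card_image_of_injective _ hf, Finset.card_product, Finset.card_range, hF] at hcard
  nlinarith

/-- If `H` moved points arbitrarily far, then so would some `g ∈ K`, and the direct product of `H`
and `⟨g⟩` would contain too many elements of small displacement. -/
theorem Acylindrical.isBounded_of_le_centralizer (hA : A.Acylindrical) {H K : Subgroup G}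
    (hHK : H ≤ Subgroup.centralizer K) (hdisj : Disjoint H K) [Infinite K] : A.IsBounded H := by
  obtain ⟨k, C, -, hA⟩ := hA
  by_contra hH
  obtain ⟨g, hgK, hg⟩ := hA.exists_not_isBounded_zpowers hHK hH
  have hle : Subgroup.zpowers g ≤ K := Subgroup.zpowers_le.2 hgK
  have := hA.finite_of_le_centralizer_of_disjoint_zpowers
    (hHK.trans (Subgroup.centralizer_le hle)) (hdisj.mono_right hle) hg
  exact hH (isBounded_of_finite H)

end TreeAction

namespace TreeAction

open TreeMetric MulAction
open scoped Pointwise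

variable {G : Type*} [Group G] {A : TreeAction G}

/-! ### The Helly property -/

theorem exists_le_stabilizer_forall_between {H : Subgroup G} {z : A.V}
    (hz : H ≤ stabilizer G z) (o : A.V) :
    ∃ s, H ≤ stabilizer G s ∧ ∀ q, H ≤ stabilizer G q → Between A.T o s q := by
  obtain ⟨s, hs, hmin⟩ := (measure fun q ↦ A.T.dist o q).wf.has_min
    {q : A.V | H ≤ stabilizer G q} ⟨z, hz⟩
  refine ⟨s, hs, fun q hq ↦ ?_⟩
  obtain ⟨m, hm, hom⟩ := exists_between_proj A.isTree s q o
  have hmin' : ¬ A.T.dist o m < A.T.dist o s :=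
    hmin m ((le_inf hs hq).trans (stabilizer_inf_le_of_between hm))
  have hms : A.T.dist m s = 0 := by
    have := hom s (by simp)
    omega
  obtain rfl := A.isTree.connected.dist_eq_zero_iff.1 hms
  exact hom q (by simp)

theorem exists_iSup_le_stabilizer {ι : Type*} [Nonempty ι] {H : ι → Subgroup G}
    (hpair : ∀ i j, ∃ z : A.V, H i ⊔ H j ≤ stabilizer G z) {o : A.V} {D : ℕ}
    (hD : ∀ i, ∃ z, H i ≤ stabilizer G z ∧ A.T.dist o z ≤ D) :
    ∃ z : A.V, ⨆ i, H i ≤ stabilizer G z := by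
  have hgate (i : ι) := exists_le_stabilizer_forall_between (hD i).choose_spec.1 o
  choose s hs hbetween using hgate
  have hbdd : BddAbove (Set.range fun i ↦ A.T.dist o (s i)) := by
    refine ⟨D, ?_⟩
    rintro _ ⟨i, rfl⟩
    obtain ⟨z, hz, hoz⟩ := hD i
    exact (Nat.le_of_add_right_le (hbetween i z hz).le).trans hoz
  obtain ⟨i, hi⟩ := Nat.sSup_mem (Set.range_nonempty _) hbdd
  refine ⟨s i, iSup_le fun j ↦ ?_⟩
  obtain ⟨z, hz⟩ := hpair i j
  obtain ⟨hiz, hjz⟩ := sup_le_iff.1 hz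
  have hle : A.T.dist o (s j) ≤ A.T.dist o (s i) := (le_csSup hbdd ⟨j, rfl⟩).trans_eq hi.symm
  have h₁ := hbetween i z hiz
  have h₂ := hbetween j z hjz
  have h₃ := h₂.of_dist_le A.isTree h₁ hle
  exact (le_inf (hs j) hjz).trans (stabilizer_inf_le_of_between (by omega))

theorem eq_or_eq_smul_of_dist_smul_eq_one {g : G} {z z' : A.V} (hz : A.T.dist z (g • z) = 1)
    (hgz : g • g • z = z) (hz' : A.T.dist z' (g • z') = 1) : z' = z ∨ z' = g • z := by
  have h₁ := A.dist_smul g z' z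
  have h₂ : A.T.dist (g • z') z = A.T.dist z' (g • z) := by rw [← A.dist_smul g z', hgz]
  simp only [← A.isTree.connected.dist_eq_zero_iff]
  rcases A.isTree.dist_eq_dist_add_one_of_adj z' (SimpleGraph.dist_eq_one_iff_adj.1 hz) with h | h
  · have hb : Between A.T z' (g • z) z := by grind only [SimpleGraph.dist_comm]
    grind only [SimpleGraph.dist_comm, hb.or_between A.isTree (g • z')]
  · have hb : Between A.T z' z (g • z) := by grind only [SimpleGraph.dist_comm]
    grind only [SimpleGraph.dist_comm, hb.or_between A.isTree (g • z')]

theorem isBounded_stabilizer_pair (x y : A.V) : A.IsBounded (stabilizer G ({x, y} : Set A.V)) := by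
  refine ⟨x, A.T.dist x y, fun h hh ↦ ?_⟩
  have hx : h • x ∈ ({x, y} : Set A.V) := (mem_stabilizer_set.1 hh x).2 (by simp)
  rcases hx with hx | rfl
  · simp [hx]
  · rfl

theorem IsBounded.exists_le_stabilizer_pair {H : Subgroup G} (hH : A.IsBounded H) {g : G}
    (hg : g ∈ H) (hodd : g ∉ A.typePreserving) :
    ∃ z : A.V, A.T.dist z (g • z) = 1 ∧ g • g • z = z ∧
      H ≤ stabilizer G ({z, g • z} : Set A.V) := by
  obtain ⟨z, hz⟩ := hH.exists_forall_dist_smul_le_one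
  rw [A.mem_typePreserving z] at hodd
  have hfix {h : G} (hh : h ∈ H) (heven : Even (A.T.dist z (h • z))) : h • z = z :=
    smul_eq_of_mem_typePreserving ((A.mem_typePreserving z).2 heven) (hz h hh)
  have hinv (h : G) : Even (A.T.dist z (h⁻¹ • z)) ↔ Even (A.T.dist z (h • z)) := by
    rw [A.dist_inv_smul]
  refine ⟨z, ?_, ?_, fun h hh ↦ ?_⟩
  · have := hz g hg
    grind
  · rw [smul_smul]
    exact hfix (H.mul_mem hg hg) (by simp [A.even_dist_mul_smul])
  · rw [mem_stabilizer_iff, Set.smul_set_insert, Set.smul_set_singleton]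
    by_cases heven : Even (A.T.dist z (h • z))
    · have hhg := hfix (H.mul_mem (H.inv_mem hg) (H.mul_mem hh hg)) (by
        simp [A.even_dist_mul_smul, hinv, heven, hodd])
      rw [mul_smul, mul_smul, inv_smul_eq_iff] at hhg
      rw [hhg, hfix hh heven]
    · have hgh := hfix (H.mul_mem (H.inv_mem hg) hh) (by
        simp [A.even_dist_mul_smul, hinv, heven, hodd])
      have hhg := hfix (H.mul_mem hh hg) (by simp [A.even_dist_mul_smul, heven, hodd])
      rw [mul_smul, inv_smul_eq_iff] at hgh
      rw [mul_smul] at hhg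
      rw [hhg, hgh, Set.pair_comm]

/-- Without fixed vertices, all the subgroups invert the same edge. -/
theorem isBounded_iSup_or_forall_exists_le_stabilizer {ι : Sort*} {H : ι → Subgroup G}
    (hpair : ∀ i j, A.IsBounded (H i ⊔ H j)) :
    A.IsBounded (⨆ i, H i) ∨ ∀ i j, ∃ z : A.V, H i ⊔ H j ≤ stabilizer G z := by
  by_cases htype : ∀ i, H i ≤ A.typePreserving
  · exact .inr fun i j ↦ (hpair i j).exists_le_stabilizer (sup_le (htype i) (htype j))
  left
  simp only [SetLike.le_def, not_forall] at htype
  obtain ⟨i, g, hg, hodd⟩ := htype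
  have hedge (j : ι) := (hpair i j).exists_le_stabilizer_pair (Subgroup.mem_sup_left hg) hodd
  obtain ⟨z, hz, hgz, -⟩ := hedge i
  refine (isBounded_stabilizer_pair z (g • z)).mono (iSup_le fun j ↦ ?_)
  obtain ⟨z', hz', hgz', hj⟩ := hedge j
  rcases eq_or_eq_smul_of_dist_smul_eq_one hz hgz hz' with rfl | rfl
  · exact le_sup_right.trans hj
  · rw [hgz, Set.pair_comm] at hj
    exact le_sup_right.trans hj

theorem isBounded_iSup_of_finite {ι : Type*} [Finite ι] {H : ι → Subgroup G}
    (hpair : ∀ i j, A.IsBounded (H i ⊔ H j)) : A.IsBounded (⨆ i, H i) := by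
  refine (isBounded_iSup_or_forall_exists_le_stabilizer hpair).elim id fun hfix ↦ ?_
  rcases isEmpty_or_nonempty ι with _ | _
  · rw [iSup_of_empty]
    exact isBounded_of_finite ⊥
  obtain ⟨o⟩ := A.isTree.connected.nonempty
  choose z hz using fun i ↦ hfix i i
  obtain ⟨D, hD⟩ := (Set.finite_range fun i ↦ A.T.dist o (z i)).bddAbove
  obtain ⟨s, hs⟩ := exists_iSup_le_stabilizer hfix (o := o) (D := D) fun i ↦
    ⟨z i, le_sup_left.trans (hz i), hD ⟨i, rfl⟩⟩
  exact (isBounded_stabilizer s).mono hs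

theorem KCAcylindrical.dist_lt_of_le_stabilizer {k C : ℕ} (hA : A.KCAcylindrical k C)
    {K : Subgroup G} [Infinite K] {x y : A.V} (hx : K ≤ stabilizer G x)
    (hy : K ≤ stabilizer G y) : A.T.dist x y < k := by
  by_contra! hk
  exact Set.infinite_coe_iff.1 (inferInstanceAs (Infinite K)) <|
    (hA x y hk).1.subset fun g hg ↦ ⟨hx hg, hy hg⟩

/-- An infinite common subgroup `K` keeps the fixed vertices at bounded distance. -/
theorem Acylindrical.isBounded_iSup (hA : A.Acylindrical) {ι : Type*} {H : ι → Subgroup G}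
    {K : Subgroup G} [Infinite K] (hK : ∀ i, K ≤ H i)
    (hpair : ∀ i j, A.IsBounded (H i ⊔ H j)) : A.IsBounded (⨆ i, H i) := by
  obtain ⟨k, C, -, hA⟩ := hA
  refine (isBounded_iSup_or_forall_exists_le_stabilizer hpair).elim id fun hfix ↦ ?_
  rcases isEmpty_or_nonempty ι with _ | ⟨⟨i₀⟩⟩
  · rw [iSup_of_empty]
    exact isBounded_of_finite ⊥
  choose z hz using fun i ↦ hfix i i
  have hHz (i : ι) : H i ≤ stabilizer G (z i) := le_sup_left.trans (hz i)
  have : Nonempty ι := ⟨i₀⟩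
  obtain ⟨s, hs⟩ := exists_iSup_le_stabilizer hfix (o := z i₀) (D := k) fun i ↦ ⟨z i, hHz i,
    (hA.dist_lt_of_le_stabilizer ((hK i₀).trans (hHz i₀)) ((hK i).trans (hHz i))).le⟩
  exact (isBounded_stabilizer s).mono hs

end TreeAction

/-! ### Amalgamated products and their Bass–Serre trees -/

section conjSubgroup

variable {G : Type*} [Group G] {H K : Subgroup G} {g x : G}

theorem mem_conjSubgroup : x ∈ conjSubgroup g H ↔ g⁻¹ * x * g ∈ H := by
  rw [conjSubgroup, Subgroup.mem_map_equiv, MulAut.conj_symm_apply]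

theorem conjSubgroup_mono (hHK : H ≤ K) : conjSubgroup g H ≤ conjSubgroup g K :=
  Subgroup.map_mono hHK

theorem conjSubgroup_iInf {ι : Sort*} (S : ι → Subgroup G) :
    conjSubgroup g (⨅ i, S i) = ⨅ i, conjSubgroup g (S i) := by
  ext x
  simp only [mem_conjSubgroup, Subgroup.mem_iInf]

end conjSubgroup

theorem TreeAction.acylindrical_of_exists_inf_le_conjSubgroup {G : Type*} [Group G]
    {A : TreeAction G} (k : ℕ) (H : Subgroup G) [Finite H]
    (hH : ∀ x y : A.V, k ≤ A.T.dist x y →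
      ∃ g, MulAction.stabilizer G x ⊓ MulAction.stabilizer G y ≤ conjSubgroup g H) :
    A.Acylindrical := by
  refine ⟨k, Nat.card H, Nat.card_pos, fun x y hxy ↦ ?_⟩
  obtain ⟨g, hg⟩ := hH x y hxy
  have hfin : (conjSubgroup g H : Set G).Finite := (Set.toFinite (H : Set G)).image _
  refine ⟨hfin.subset hg, (Set.ncard_le_ncard hg hfin).trans ?_⟩
  exact Set.ncard_image_le (Set.toFinite (H : Set G))

theorem pushout_of_eq_of {G : Type*} [Group G] {H : Bool → Subgroup G} {i j : Bool} {g : G}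
    (hi : g ∈ H i) (hj : g ∈ H j) :
    (Monoid.PushoutI.of i (⟨g, hi⟩ : H i) :
      Monoid.PushoutI fun i ↦ Subgroup.inclusion (iInf_le H i)) =
      Monoid.PushoutI.of j (⟨g, hj⟩ : H j) := by
  obtain rfl | hij := eq_or_ne i j
  · rfl
  have hmem : g ∈ ⨅ i, H i := Subgroup.mem_iInf.2 fun k ↦ by
    obtain rfl | rfl : k = i ∨ k = j := by cases i <;> cases j <;> cases k <;> simp_all
    exacts [hi, hj]
  let φ (i : Bool) := Subgroup.inclusion (iInf_le H i)
  have heq (k : Bool) := Monoid.PushoutI.of_apply_eq_base φ k (⟨g, hmem⟩ : ↥(⨅ i, H i))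
  exact (heq i).trans (heq j).symm

/-- A decomposition of the group `G` as the amalgamated product of two of its subgroups over their
intersection. It is encoded by a homomorphism from `G` to the abstract amalgamated product that is
the canonical map on each factor; since the factors generate `G`, it is an isomorphism. -/
structure Amalgam (G : Type*) [Group G] where
  factor : Bool → Subgroup G
  iSup_factor : ⨆ i, factor i = ⊤
  toPushout : G →* Monoid.PushoutI fun i ↦ Subgroup.inclusion (iInf_le factor i)
  toPushout_coe (i : Bool) (x : factor i) : toPushout x = Monoid.PushoutI.of i x

namespace Amalgam

section

variable {G : Type*} [Group G] (M : Amalgam G)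

/-- The amalgamated subgroup. -/
abbrev base : Subgroup G := ⨅ i, M.factor i

theorem base_le (i : Bool) : M.base ≤ M.factor i := iInf_le _ i

/-- `M.IsReduced i j g` means that `g` is a product of elements outside the amalgamated subgroup
that alternately lie in the two factors, the first one in `M.factor j` and the last one in
`M.factor i`. -/
inductive IsReduced (i : Bool) : Bool → G → Prop
  | of {g : G} (hg : g ∈ M.factor i) (hgM : g ∉ M.base) : IsReduced i i g
  | mul {j : Bool} {a g : G} (ha : a ∈ M.factor (!j)) (haM : a ∉ M.base)
      (hg : IsReduced i j g) : IsReduced i (!j) (a * g)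

variable {M}

theorem IsReduced.base_mul {i j : Bool} {c g : G} (hg : M.IsReduced i j g) (hc : c ∈ M.base) :
    M.IsReduced i j (c * g) := by
  cases hg with
  | of hg hgM =>
    exact .of (mul_mem (M.base_le i hc) hg) (by rwa [Subgroup.mul_mem_cancel_left _ hc])
  | mul ha haM hg =>
    rw [← mul_assoc]
    exact .mul (mul_mem (M.base_le _ hc) ha) (by rwa [Subgroup.mul_mem_cancel_left _ hc]) hg

theorem IsReduced.exists_factor_mul {i j k : Bool} {a g : G} (hg : M.IsReduced i j g)
    (ha : a ∈ M.factor k) (hgM : ¬ (k = i ∧ g ∈ M.factor i)) :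
    ∃ j', M.IsReduced i j' (a * g) := by
  by_cases haM : a ∈ M.base
  · exact ⟨j, hg.base_mul haM⟩
  obtain rfl | rfl : k = j ∨ k = !j := Bool.eq_or_eq_not k j
  · cases hg with
    | of hg _ => exact absurd ⟨rfl, hg⟩ hgM
    | @mul j b g hb _ hg =>
      rw [← mul_assoc]
      by_cases habM : a * b ∈ M.base
      · exact ⟨j, hg.base_mul habM⟩
      · exact ⟨!j, .mul (mul_mem ha hb) habM hg⟩
  · exact ⟨!j, .mul ha haM hg⟩

theorem mk_notMem_range_inclusion {i : Bool} {a : G} (ha : a ∈ M.factor i) (haM : a ∉ M.base) :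
    (⟨a, ha⟩ : M.factor i) ∉ (Subgroup.inclusion (M.base_le i)).range := by
  rwa [Subgroup.inclusion_range, Subgroup.mem_subgroupOf]

theorem IsReduced.exists_word {i j : Bool} {g : G} (hg : M.IsReduced i j g) :
    ∃ w : Monoid.CoprodI.Word fun i ↦ M.factor i, w.fstIdx = some j ∧
      Monoid.PushoutI.Reduced (fun i ↦ Subgroup.inclusion (M.base_le i)) w ∧
      Monoid.PushoutI.ofCoprodI w.prod = M.toPushout g := by
  have ne_one {i : Bool} {a : G} (ha : a ∈ M.factor i) (haM : a ∉ M.base) :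
      (⟨a, ha⟩ : M.factor i) ≠ 1 := fun h ↦
    mk_notMem_range_inclusion ha haM (h ▸ one_mem _)
  induction hg with
  | of hg hgM =>
    refine ⟨Monoid.CoprodI.Word.cons (i := i) ⟨_, hg⟩ .empty
      (by simp [Monoid.CoprodI.Word.fstIdx]) (ne_one hg hgM), by simp, ?_,
      by simp [← M.toPushout_coe]⟩
    rintro x hx
    obtain rfl := List.mem_singleton.1 hx
    exact mk_notMem_range_inclusion hg hgM
  | mul ha haM _ ih =>
    obtain ⟨w, hfst, hred, hprod⟩ := ih
    refine ⟨.cons ⟨_, ha⟩ w (by simp [hfst]) (ne_one ha haM), by simp, ?_,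
      by simp [hprod, ← M.toPushout_coe]⟩
    rintro x hx
    obtain rfl | hx := List.mem_cons.1 hx
    · exact mk_notMem_range_inclusion ha haM
    · exact hred x hx

theorem IsReduced.notMem_base {i j : Bool} {g : G} (hg : M.IsReduced i j g) : g ∉ M.base := by
  obtain ⟨w, hfst, hred, hprod⟩ := hg.exists_word
  intro hgM
  have hw := hred.eq_empty_of_mem_range (fun i ↦ Subgroup.inclusion_injective _) (by
    rw [hprod, M.toPushout_coe true ⟨g, M.base_le true hgM⟩]
    exact ⟨⟨g, hgM⟩, (Monoid.PushoutI.of_apply_eq_base _ true (⟨g, hgM⟩ : M.base)).symm⟩)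
  simp [hw, Monoid.CoprodI.Word.fstIdx] at hfst

variable (M)

/-- The vertices of the Bass–Serre tree: the cosets of the two factors. -/
def Vert : Type _ := Σ i : Bool, G ⧸ M.factor i

/-- The coset `g * M.factor i` as a vertex of the Bass–Serre tree. -/
def vert (i : Bool) (g : G) : M.Vert := ⟨i, g⟩

theorem exists_eq_vert (p : M.Vert) : ∃ i g, p = M.vert i g := by
  obtain ⟨i, x⟩ := p
  obtain ⟨g, rfl⟩ := QuotientGroup.mk_surjective x
  exact ⟨i, g, rfl⟩

theorem vert_eq_vert {i j : Bool} {g h : G} :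
    M.vert i g = M.vert j h ↔ i = j ∧ g⁻¹ * h ∈ M.factor i := by
  constructor
  · intro heq
    obtain rfl : i = j := congrArg Sigma.fst heq
    exact ⟨rfl, QuotientGroup.eq.1 (eq_of_heq (Sigma.mk.inj heq).2)⟩
  · rintro ⟨rfl, hgh⟩
    rw [vert, vert, QuotientGroup.eq.2 hgh]

/-- The Bass–Serre tree: its edges are the cosets of the amalgamated subgroup, each joining the
two cosets of the factors that contain it. -/
def graph : SimpleGraph M.Vert where
  Adj p q := ∃ i g, p = M.vert i g ∧ q = M.vert (!i) g
  symm := ⟨fun _ _ ⟨i, g, hp, hq⟩ ↦ ⟨!i, g, hq, by rwa [Bool.not_not]⟩⟩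
  loopless := ⟨fun _ ⟨i, g, hp, hq⟩ ↦ by simpa [vert_eq_vert] using hp.symm.trans hq⟩

theorem adj_vert (i : Bool) (g : G) : M.graph.Adj (M.vert i g) (M.vert (!i) g) := ⟨i, g, rfl, rfl⟩

instance : MulAction G M.Vert := inferInstanceAs (MulAction G (Σ i, G ⧸ M.factor i))

theorem smul_vert (h : G) (i : Bool) (g : G) : h • M.vert i g = M.vert i (h * g) := rfl

variable {M} in
theorem adj_smul {p q : M.Vert} (h : G) (hpq : M.graph.Adj p q) :
    M.graph.Adj (h • p) (h • q) := by
  obtain ⟨i, g, rfl, rfl⟩ := hpq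
  exact M.adj_vert i (h * g)

/-- The action of `G` on its Bass–Serre tree by left multiplication. -/
def actHom : G →* (M.graph ≃g M.graph) where
  toFun h :=
    { toEquiv := MulAction.toPerm h
      map_rel_iff' {p q} := ⟨fun hpq ↦ by simpa using adj_smul h⁻¹ hpq, adj_smul h⟩ }
  map_one' := by
    ext p
    exact one_smul G p
  map_mul' g h := by
    ext p
    exact mul_smul g h p

theorem connected : M.graph.Connected := by
  let H : Subgroup G :=
    { carrier := {g | M.graph.Reachable (M.vert true 1) (M.vert true g)}
      one_mem' := .refl _
      mul_mem' {g h} hg hh := by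
        refine hg.trans ?_
        simpa [actHom, smul_vert] using hh.map (M.actHom g).toHom
      inv_mem' {g} hg := by
        simpa [actHom, smul_vert] using (hg.map (M.actHom g⁻¹).toHom).symm }
  have hH : H = ⊤ := by
    rw [eq_top_iff, ← M.iSup_factor, iSup_le_iff]
    rintro (_ | _) g hg
    · have heq : M.vert false 1 = M.vert false g := M.vert_eq_vert.2 ⟨rfl, by simpa using hg⟩
      exact (M.adj_vert true 1).reachable.trans (heq ▸ (M.adj_vert false g).reachable)
    · have heq : M.vert true 1 = M.vert true g := M.vert_eq_vert.2 ⟨rfl, by simpa using hg⟩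
      change M.graph.Reachable _ _
      rw [heq]
  have reachable (p : M.Vert) : M.graph.Reachable (M.vert true 1) p := by
    obtain ⟨i, g, rfl⟩ := M.exists_eq_vert p
    have hg : M.graph.Reachable (M.vert true 1) (M.vert true g) := hH.ge (Subgroup.mem_top g)
    cases i with
    | false => exact hg.trans (M.adj_vert true g).reachable
    | true => exact hg
  exact (SimpleGraph.connected_iff_exists_forall_reachable _).2 ⟨_, reachable⟩

/-- `M.OnSide i j (h⁻¹ * g)` expresses that the vertex `h * M.factor j` lies in the half-tree of
the vertices that are closer to `g * M.factor i` than to the other coset at the edge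
`g * M.base`. -/
def OnSide (i j : Bool) (u : G) : Prop :=
  (∃ k, M.IsReduced i k u) ∨ (j = i ∧ u ∈ M.factor i)

variable {M}

theorem OnSide.factor_mul {i j : Bool} {a u : G} (hu : M.OnSide i j u) (ha : a ∈ M.factor j) :
    M.OnSide i j (a * u) := by
  by_cases hij : j = i ∧ u ∈ M.factor i
  · exact .inr ⟨hij.1, mul_mem (hij.1 ▸ ha) hij.2⟩
  · obtain ⟨k, hk⟩ := hu.resolve_right hij
    exact .inl (hk.exists_factor_mul ha hij)

theorem onSide_iff_of_notMem_base {i j : Bool} {u : G} (hu : u ∉ M.base) :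
    M.OnSide i j u ↔ ∃ k, M.IsReduced i k u :=
  ⟨fun h ↦ h.elim id fun ⟨_, hui⟩ ↦ ⟨i, .of hui hu⟩, .inl⟩

variable (M)

/-- The half-tree of the vertices closer to `g * M.factor i` than to the other coset at the edge
`g * M.base`. -/
def side (i : Bool) (g : G) : Set M.Vert :=
  {p | ∃ j h, p = M.vert j h ∧ M.OnSide i j (h⁻¹ * g)}

theorem vert_mem_side {i j : Bool} {g h : G} :
    M.vert j h ∈ M.side i g ↔ M.OnSide i j (h⁻¹ * g) := by
  refine ⟨?_, fun hu ↦ ⟨j, h, rfl, hu⟩⟩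
  rintro ⟨k, h', heq, hu⟩
  obtain ⟨rfl, hh'⟩ := M.vert_eq_vert.1 heq
  simpa [mul_assoc] using hu.factor_mul hh'

theorem mem_side_of_adj {i : Bool} {g : G} {p q : M.Vert}
    (hpq : (M.graph.deleteEdges {s(M.vert i g, M.vert (!i) g)}).Adj p q)
    (hp : p ∈ M.side i g) : q ∈ M.side i g := by
  obtain ⟨⟨j, h, rfl, rfl⟩, hne⟩ := SimpleGraph.deleteEdges_adj.1 hpq
  have hgh : h⁻¹ * g ∉ M.base := by
    refine fun hgh ↦ hne ?_
    have heq (k : Bool) : M.vert k h = M.vert k g := M.vert_eq_vert.2 ⟨rfl, M.base_le k hgh⟩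
    rw [heq, heq, Set.mem_singleton_iff]
    obtain rfl | rfl := Bool.eq_or_eq_not j i
    · rfl
    · rw [Bool.not_not, Sym2.eq_swap]
  rw [vert_mem_side, onSide_iff_of_notMem_base hgh] at hp ⊢
  exact hp

theorem isAcyclic : M.graph.IsAcyclic := by
  rw [SimpleGraph.isAcyclic_iff_forall_adj_isBridge]
  rintro _ _ ⟨i, g, rfl, rfl⟩
  rw [SimpleGraph.isBridge_iff]
  rintro ⟨w⟩
  have mem_side {p q : M.Vert}
      (w : (M.graph.deleteEdges {s(M.vert i g, M.vert (!i) g)}).Walk p q)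
      (hp : p ∈ M.side i g) : q ∈ M.side i g := by
    induction w with
    | nil => exact hp
    | cons hadj _ ih => exact ih (M.mem_side_of_adj hadj hp)
  have hmem := mem_side w (M.vert_mem_side.2 (.inr ⟨rfl, by simp⟩))
  rw [vert_mem_side, inv_mul_cancel] at hmem
  rcases hmem with ⟨k, hk⟩ | ⟨hi, -⟩
  · exact hk.notMem_base (one_mem _)
  · simp at hi

end

variable {G : Type} [Group G] (M : Amalgam G)

/-- The action on the Bass–Serre tree. -/
def tree : TreeAction G where
  V := M.Vert
  T := M.graph
  isTree := ⟨M.connected, M.isAcyclic⟩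
  act := M.actHom

open MulAction TreeMetric

theorem stabilizer_vert (i : Bool) (g : G) :
    stabilizer G (α := M.tree.V) (M.vert i g) = conjSubgroup g (M.factor i) := by
  ext x
  rw [mem_conjSubgroup, ← inv_mem_iff (x := g⁻¹ * x * g)]
  change M.vert i (x * g) = M.vert i g ↔ _
  simp [vert_eq_vert, mul_assoc]

theorem even_dist_vert_iff (i j : Bool) (g h : G) :
    Even (M.graph.dist (M.vert i g) (M.vert j h)) ↔ i = j := by
  let c : M.graph.Coloring Bool := .mk Sigma.fst (by
    rintro _ _ ⟨i, g, rfl, rfl⟩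
    simp [vert])
  obtain ⟨w, hw⟩ := M.connected.exists_walk_length_eq_dist (M.vert i g) (M.vert j h)
  rw [← hw, c.even_length_iff_congr w, ← Bool.eq_iff_iff]
  rfl

theorem typePreserving_eq_top : M.tree.typePreserving = ⊤ := by
  refine eq_top_iff.2 fun g _ ↦ (M.tree.mem_typePreserving (M.vert true 1)).2 ?_
  exact (M.even_dist_vert_iff true true 1 (g * 1)).2 rfl

theorem exists_le_conjSubgroup_of_isBounded {H : Subgroup G} (hH : M.tree.IsBounded H) :
    ∃ i g, H ≤ conjSubgroup g (M.factor i) := by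
  obtain ⟨z, hz⟩ := hH.exists_le_stabilizer (M.typePreserving_eq_top ▸ le_top)
  obtain ⟨i, g, rfl⟩ := M.exists_eq_vert z
  exact ⟨i, g, hz.trans_eq (M.stabilizer_vert i g)⟩

theorem exists_conjSubgroup_inf_le {i : Bool} {g h : G} (hgh : g⁻¹ * h ∉ M.factor i) :
    ∃ a, conjSubgroup g (M.factor i) ⊓ conjSubgroup h (M.factor i) ≤ conjSubgroup a M.base := by
  have hne : M.vert i g ≠ M.vert i h := fun heq ↦ hgh (M.vert_eq_vert.1 heq).2
  obtain ⟨u, hu, hdist⟩ := exists_between_dist_eq M.connected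
    (M.connected.pos_dist_of_ne hne)
  obtain ⟨j, a, heq, rfl⟩ := SimpleGraph.dist_eq_one_iff_adj.1 hdist
  obtain rfl : i = j := congrArg Sigma.fst heq
  refine ⟨a, ?_⟩
  rw [conjSubgroup_iInf]
  refine le_iInf fun j ↦ ?_
  obtain rfl | rfl := Bool.eq_or_eq_not j i
  · rw [← stabilizer_vert, heq, stabilizer_vert]
    exact inf_le_left
  · simp only [← stabilizer_vert]
    exact TreeAction.stabilizer_inf_le_of_between hu

theorem exists_stabilizer_inf_le_of_three_le_dist {x y : M.tree.V} (hxy : 3 ≤ M.tree.T.dist x y)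
    (j : Bool) : ∃ g h, g⁻¹ * h ∉ M.factor j ∧
      stabilizer G x ⊓ stabilizer G y ≤
        conjSubgroup g (M.factor j) ⊓ conjSubgroup h (M.factor j) := by
  obtain ⟨i, a, rfl⟩ := M.exists_eq_vert x
  obtain ⟨k, b, rfl⟩ := M.exists_eq_vert y
  -- The vertices of type `j` on the path are those whose distance to `x` has the parity of `t`.
  obtain ⟨t, ht, hparity⟩ : ∃ t ≤ 1, (Even t ↔ i = j) := by
    by_cases hij : i = j
    · exact ⟨0, by simp, by simp [hij]⟩
    · exact ⟨1, le_rfl, by simp [hij]⟩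
  have exists_between (s : ℕ) (hs : s ≤ 3) (heven : Even s ↔ i = j) :
      ∃ g, Between M.graph (M.vert i a) (M.vert j g) (M.vert k b) ∧
        M.graph.dist (M.vert i a) (M.vert j g) = s := by
    obtain ⟨p, hp, hdist⟩ := exists_between_dist_eq M.connected (hs.trans hxy)
    obtain ⟨l, g, rfl⟩ := M.exists_eq_vert p
    have hl : i = l ↔ i = j := by rw [← M.even_dist_vert_iff, hdist, heven]
    obtain rfl : l = j := by cases i <;> cases j <;> cases l <;> simp_all
    exact ⟨g, hp, hdist⟩
  obtain ⟨g, hg, hgdist⟩ := exists_between t (by omega) hparity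
  obtain ⟨h, hh, hhdist⟩ := exists_between (t + 2) (by omega)
    (by simpa [parity_simps] using hparity)
  refine ⟨g, h, fun hgh ↦ ?_, ?_⟩
  · rw [(M.vert_eq_vert (h := h)).2 ⟨rfl, hgh⟩] at hgdist
    omega
  · rw [← stabilizer_vert, ← stabilizer_vert]
    exact le_inf (TreeAction.stabilizer_inf_le_of_between hg)
      (TreeAction.stabilizer_inf_le_of_between hh)

end Amalgam

/-! ### Full subgroups of graph products -/

namespace GraphProduct

variable {V : Type} {Γ : SimpleGraph V} {Gv : V → Type} [∀ v, Group (Gv v)]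

theorem commute_of {u v : V} (huv : Γ.Adj u v) (x : Gv u) (y : Gv v) :
    Commute (of Γ Gv u x) (of Γ Gv v y) := by
  have hmem : Monoid.CoprodI.of x * Monoid.CoprodI.of y * (Monoid.CoprodI.of x)⁻¹ *
      (Monoid.CoprodI.of y)⁻¹ ∈ Subgroup.normalClosure (graphProductRels Γ Gv) :=
    Subgroup.subset_normalClosure ⟨u, v, huv, x, y, rfl⟩
  have hrel := (QuotientGroup.eq_one_iff _).2 hmem
  exact mul_inv_eq_iff_eq_mul.1 (mul_inv_eq_one.1 hrel)

/-- The universal property of the graph product. -/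
def lift {K : Type*} [Group K] (φ : ∀ v, Gv v →* K)
    (hφ : ∀ u v, Γ.Adj u v → ∀ x y, Commute (φ u x) (φ v y)) : GraphProduct Γ Gv →* K :=
  QuotientGroup.lift _ (Monoid.CoprodI.lift φ) <| by
    refine Subgroup.normalClosure_le_normal ?_
    rintro _ ⟨u, v, huv, x, y, rfl⟩
    simp [MonoidHom.mem_ker, (hφ u v huv x y).eq]

theorem lift_of {K : Type*} [Group K] (φ : ∀ v, Gv v →* K)
    (hφ : ∀ u v, Γ.Adj u v → ∀ x y, Commute (φ u x) (φ v y)) (v : V) (x : Gv v) :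
    lift φ hφ (of Γ Gv v x) = φ v x :=
  Monoid.CoprodI.lift_of φ x

theorem of_mem_full {S : Set V} {v : V} (hv : v ∈ S) (x : Gv v) : of Γ Gv v x ∈ full Γ Gv S :=
  le_iSup₂_of_le (f := fun v (_ : v ∈ S) ↦ (of Γ Gv v).range) v hv le_rfl ⟨x, rfl⟩

theorem full_le {S : Set V} {H : Subgroup (GraphProduct Γ Gv)}
    (hH : ∀ v ∈ S, ∀ x, of Γ Gv v x ∈ H) : full Γ Gv S ≤ H :=
  iSup₂_le fun v hv ↦ by
    rintro _ ⟨x, rfl⟩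
    exact hH v hv x

theorem full_hom_ext {S : Set V} {K : Type*} [Group K] {f f' : full Γ Gv S →* K}
    (hff' : ∀ v (hv : v ∈ S) (x : Gv v),
      f ⟨of Γ Gv v x, of_mem_full hv x⟩ = f' ⟨of Γ Gv v x, of_mem_full hv x⟩) : f = f' := by
  have hle : full Γ Gv S ≤ (f.eqLocus f').map (full Γ Gv S).subtype :=
    full_le fun v hv x ↦ ⟨⟨of Γ Gv v x, of_mem_full hv x⟩, hff' v hv x, rfl⟩
  ext ⟨g, hg⟩
  obtain ⟨g', hg', rfl⟩ := hle hg
  exact hg'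

theorem full_mono {S S' : Set V} (hS : S ⊆ S') : full Γ Gv S ≤ full Γ Gv S' :=
  biSup_mono hS

theorem full_iUnion {ι : Sort*} (S : ι → Set V) :
    full Γ Gv (⋃ i, S i) = ⨆ i, full Γ Gv (S i) :=
  iSup_iUnion S _

theorem full_union (S S' : Set V) : full Γ Gv (S ∪ S') = full Γ Gv S ⊔ full Γ Gv S' :=
  iSup_union

theorem full_empty : full Γ Gv ∅ = ⊥ := iSup_emptyset

theorem full_univ : full Γ Gv Set.univ = ⊤ := by
  refine (Subgroup.eq_top_iff' _).2 fun g ↦ ?_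
  obtain ⟨w, rfl⟩ := QuotientGroup.mk'_surjective _ g
  induction w using Monoid.CoprodI.induction_on with
  | one => exact one_mem _
  | of v x => exact of_mem_full (Set.mem_univ v) x
  | mul w w' hw hw' => exact mul_mem hw hw'

open Classical in
/-- The retraction onto the full subgroup on `S` that kills the vertex groups outside `S`. -/
noncomputable def ret (S : Set V) : GraphProduct Γ Gv →* GraphProduct Γ Gv :=
  lift (fun v ↦ if v ∈ S then of Γ Gv v else 1) fun u v huv x y ↦ by
    split_ifs <;> simp [commute_of huv]

theorem ret_of_of_mem {S : Set V} {v : V} (hv : v ∈ S) (x : Gv v) :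
    ret S (of Γ Gv v x) = of Γ Gv v x := by
  rw [ret, lift_of, if_pos hv]

theorem ret_of_of_notMem {S : Set V} {v : V} (hv : v ∉ S) (x : Gv v) :
    ret S (of Γ Gv v x) = 1 := by
  rw [ret, lift_of, if_neg hv, MonoidHom.one_apply]

theorem ret_eq_self {S : Set V} {g : GraphProduct Γ Gv} (hg : g ∈ full Γ Gv S) : ret S g = g := by
  have hle : full Γ Gv S ≤ (ret S).eqLocus (MonoidHom.id _) := full_le fun _ ↦ ret_of_of_mem
  exact hle hg

theorem ret_mem_full_inter {S S' : Set V} {g : GraphProduct Γ Gv} (hg : g ∈ full Γ Gv S') :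
    ret S g ∈ full Γ Gv (S ∩ S') := by
  have hle : full Γ Gv S' ≤ (full Γ Gv (S ∩ S')).comap (ret S) := by
    refine full_le fun v hv x ↦ ?_
    rw [Subgroup.mem_comap]
    by_cases hvS : v ∈ S
    · rw [ret_of_of_mem hvS]
      exact of_mem_full (S := S ∩ S') ⟨hvS, hv⟩ x
    · rw [ret_of_of_notMem hvS]
      exact one_mem _
  exact hle hg

theorem full_inf_full (S S' : Set V) : full Γ Gv S ⊓ full Γ Gv S' = full Γ Gv (S ∩ S') := by
  refine le_antisymm (fun g hg ↦ ?_)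
    (le_inf (full_mono Set.inter_subset_left) (full_mono Set.inter_subset_right))
  rw [← ret_eq_self hg.1]
  exact ret_mem_full_inter hg.2

theorem disjoint_full {S S' : Set V} (hS : Disjoint S S') :
    Disjoint (full Γ Gv S) (full Γ Gv S') := by
  rw [disjoint_iff, full_inf_full, hS.inter_eq, full_empty]

theorem exists_conjSubgroup_full_inf_le (S S' : Set V) (g h : GraphProduct Γ Gv) :
    ∃ d, conjSubgroup g (full Γ Gv S) ⊓ conjSubgroup h (full Γ Gv S') ≤
      conjSubgroup d (full Γ Gv (S ∩ S')) := by
  refine ⟨g * ret S (g⁻¹ * h), fun x hx ↦ ?_⟩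
  obtain ⟨hxg, hxh⟩ := hx
  replace hxg : g⁻¹ * x * g ∈ full Γ Gv S := mem_conjSubgroup.1 hxg
  replace hxh : h⁻¹ * x * h ∈ full Γ Gv S' := mem_conjSubgroup.1 hxh
  have hret : ret S (h⁻¹ * x * h) = (ret S (g⁻¹ * h))⁻¹ * (g⁻¹ * x * g) * ret S (g⁻¹ * h) := by
    rw [← map_inv, ← congrArg (ret S (g⁻¹ * h)⁻¹ * ·) (ret_eq_self hxg), ← map_mul, ← map_mul]
    congr 1
    group
  rw [mem_conjSubgroup]
  convert ret_mem_full_inter (S := S) hxh using 1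
  rw [hret]
  group

theorem full_le_centralizer {S S' : Set V} (hadj : ∀ u ∈ S, ∀ v ∈ S', Γ.Adj u v) :
    full Γ Gv S ≤ Subgroup.centralizer (full Γ Gv S') := by
  refine full_le fun u hu x ↦ ?_
  have hle : full Γ Gv S' ≤ Subgroup.centralizer {of Γ Gv u x} := full_le fun v hv y ↦
    Subgroup.mem_centralizer_singleton_iff.2 (commute_of (hadj u hu v hv) x y).symm
  exact Subgroup.mem_centralizer_iff.2 fun y hy ↦ Subgroup.mem_centralizer_singleton_iff.1 (hle hy)

theorem of_injective (v : V) : Function.Injective (of Γ Gv v) := by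
  classical
  let toPi : GraphProduct Γ Gv →* ∀ u, Gv u := lift (MonoidHom.mulSingle Gv)
    fun _ _ huv ↦ Pi.mulSingle_commute huv.ne
  have hcomp : toPi ∘ of Γ Gv v = Pi.mulSingle v := funext (lift_of _ _ v)
  exact .of_comp (f := toPi) (hcomp ▸ Pi.mulSingle_injective v)

/-- This holds because the retraction to the group of a vertex outside `S'` kills `full S'`. -/
theorem subset_of_full_le_conjSubgroup [∀ v, Nontrivial (Gv v)] {S S' : Set V}
    {g : GraphProduct Γ Gv} (hle : full Γ Gv S ≤ conjSubgroup g (full Γ Gv S')) : S ⊆ S' := by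
  intro v hv
  by_contra hvS'
  obtain ⟨x, hx⟩ := exists_ne (1 : Gv v)
  have hmem := ret_mem_full_inter (S := {v}) (mem_conjSubgroup.1 (hle (of_mem_full hv x)))
  rw [Set.singleton_inter_eq_empty.2 hvS', full_empty, Subgroup.mem_bot, map_mul, map_mul, map_inv,
    ret_of_of_mem (Set.mem_singleton v), 
    mul_assoc, inv_mul_eq_one, right_eq_mul] at hmem
  exact hx (of_injective v (hmem.trans (map_one _).symm))

/-! ### Splittings of graph products -/

section split

variable (S : Bool → Set V)

/-- The canonical map of a vertex group into the amalgamated product of the full subgroups on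
`S true` and `S false`. -/
noncomputable def splitOf (hvert : ∀ v, ∃ i, v ∈ S i) (v : V) : Gv v →*
    Monoid.PushoutI fun i ↦ Subgroup.inclusion (iInf_le (fun i ↦ full Γ Gv (S i)) i) :=
  (Monoid.PushoutI.of (hvert v).choose).comp <|
    (of Γ Gv v).codRestrict _ (of_mem_full (hvert v).choose_spec)

theorem splitOf_apply {hvert : ∀ v, ∃ i, v ∈ S i} {i : Bool} {v : V} (hv : v ∈ S i) (x : Gv v) :
    splitOf (Γ := Γ) S hvert v x =
      Monoid.PushoutI.of i (⟨of Γ Gv v x, of_mem_full hv x⟩ : full Γ Gv (S i)) :=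
  pushout_of_eq_of (H := fun i ↦ full Γ Gv (S i)) _ _

variable (hvert : ∀ v, ∃ i, v ∈ S i) (hadj : ∀ u v, Γ.Adj u v → ∃ i, u ∈ S i ∧ v ∈ S i)

include hadj in
theorem commute_splitOf {u v : V} (huv : Γ.Adj u v) (x : Gv u) (y : Gv v) :
    Commute (splitOf (Γ := Γ) S hvert u x) (splitOf S hvert v y) := by
  obtain ⟨i, hu, hv⟩ := hadj u v huv
  rw [splitOf_apply S hu, splitOf_apply S hv]
  exact Commute.map (Subtype.ext (commute_of huv x y).eq) _

/-- The canonical map of the graph product into the amalgamated product of the full subgroups on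
`S true` and `S false`. -/
noncomputable def splitHom : GraphProduct Γ Gv →*
    Monoid.PushoutI fun i ↦ Subgroup.inclusion (iInf_le (fun i ↦ full Γ Gv (S i)) i) :=
  lift (splitOf S hvert) fun _ _ ↦ commute_splitOf S hvert hadj

theorem splitHom_of {i : Bool} {v : V} (hv : v ∈ S i) (x : Gv v) :
    splitHom S hvert hadj (of Γ Gv v x) =
      Monoid.PushoutI.of i (⟨of Γ Gv v x, of_mem_full hv x⟩ : full Γ Gv (S i)) := by
  rw [splitHom, lift_of, splitOf_apply S hv]

/-- The splitting of a graph product along two full subgraphs, with vertex sets `S true` and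
`S false`, that cover all vertices and edges. -/
noncomputable def split : Amalgam (GraphProduct Γ Gv) where
  factor i := full Γ Gv (S i)
  iSup_factor := by
    rw [← full_iUnion, Set.iUnion_eq_univ_iff.2 hvert, full_univ]
  toPushout := splitHom S hvert hadj
  toPushout_coe i := DFunLike.congr_fun <|
    full_hom_ext (f := (splitHom S hvert hadj).comp (Subgroup.subtype _)) fun _ ↦
      splitHom_of S hvert hadj

theorem factor_split (i : Bool) : (split (Gv := Gv) S hvert hadj).factor i = full Γ Gv (S i) := rfl

theorem base_split : (split (Gv := Gv) S hvert hadj).base = full Γ Gv (S true ∩ S false) := by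
  rw [Amalgam.base, iInf_bool_eq, factor_split, factor_split, full_inf_full]

end split

variable (Gv) in
/-- The splitting of a graph product along the full subgraphs on the complement of a vertex `b` and
on a set `T` that contains the star of `b`. -/
noncomputable def vertexSplit (b : V) (T : Set V) (hT : insert b (Γ.neighborSet b) ⊆ T) :
    Amalgam (GraphProduct Γ Gv) :=
  split (fun i ↦ cond i {b}ᶜ T)
    (fun v ↦ by
      obtain rfl | hvb := eq_or_ne v b
      · exact ⟨false, hT (Set.mem_insert v _)⟩
      · exact ⟨true, hvb⟩)
    (fun u v huv ↦ by
      obtain rfl | hub := eq_or_ne u b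
      · exact ⟨false, hT (Set.mem_insert u _), hT (Set.mem_insert_of_mem _ huv)⟩
      obtain rfl | hvb := eq_or_ne v b
      · exact ⟨false, hT (Set.mem_insert_of_mem _ huv.symm), hT (Set.mem_insert v _)⟩
      · exact ⟨true, hub, hvb⟩)

theorem exists_conjSubgroup_full_compl_inf_le (a : V) {g h : GraphProduct Γ Gv}
    (hgh : g⁻¹ * h ∉ full Γ Gv {a}ᶜ) :
    ∃ c, conjSubgroup g (full Γ Gv {a}ᶜ) ⊓ conjSubgroup h (full Γ Gv {a}ᶜ) ≤
      conjSubgroup c (full Γ Gv (Γ.neighborSet a)) := by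
  let M : Amalgam (GraphProduct Γ Gv) := vertexSplit Gv a _ subset_rfl
  obtain ⟨c, hc⟩ : ∃ c, conjSubgroup g (full Γ Gv {a}ᶜ) ⊓ conjSubgroup h (full Γ Gv {a}ᶜ) ≤
      conjSubgroup c M.base := M.exists_conjSubgroup_inf_le (i := true) hgh
  refine ⟨c, hc.trans (conjSubgroup_mono ?_)⟩
  simp only [M, vertexSplit, base_split]
  exact full_mono fun v hv ↦ hv.2.resolve_left hv.1

theorem insert_neighborSet_subset_compl {a b : V} (hne : a ≠ b) (hnadj : ¬ Γ.Adj a b) :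
    insert b (Γ.neighborSet b) ⊆ {a}ᶜ := by
  rintro v (rfl | hv) rfl
  · exact hne rfl
  · exact hnadj hv.symm

variable (Gv) in
/-- The splitting of a graph product given by two nonadjacent vertices `a` and `b`, whose factors
are the full subgroups on `{b}ᶜ` and `{a}ᶜ`. -/
noncomputable def pairSplit {a b : V} (hne : a ≠ b) (hnadj : ¬ Γ.Adj a b) :
    Amalgam (GraphProduct Γ Gv) :=
  vertexSplit Gv b {a}ᶜ (insert_neighborSet_subset_compl hne hnadj)

theorem acylindrical_pairSplit {a b : V} (hne : a ≠ b) (hnadj : ¬ Γ.Adj a b)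
    [Finite (full Γ Gv (Γ.neighborSet a ∩ Γ.neighborSet b))] :
    (pairSplit Gv hne hnadj).tree.Acylindrical := by
  refine TreeAction.acylindrical_of_exists_inf_le_conjSubgroup 3
    (full Γ Gv (Γ.neighborSet a ∩ Γ.neighborSet b)) fun x y hxy ↦ ?_
  obtain ⟨g, h, hgh, hle⟩ := Amalgam.exists_stabilizer_inf_le_of_three_le_dist _ hxy false
  obtain ⟨g', h', hgh', hle'⟩ := Amalgam.exists_stabilizer_inf_le_of_three_le_dist _ hxy true
  obtain ⟨c, hc⟩ := exists_conjSubgroup_full_compl_inf_le (Gv := Gv) a hgh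
  obtain ⟨c', hc'⟩ := exists_conjSubgroup_full_compl_inf_le (Gv := Gv) b hgh'
  obtain ⟨d, hd⟩ := exists_conjSubgroup_full_inf_le (Γ.neighborSet a) (Γ.neighborSet b) c c'
  exact ⟨d, (le_inf (hle.trans hc) (hle'.trans hc')).trans hd⟩

theorem not_isBounded_pairSplit [∀ v, Nontrivial (Gv v)] {a b : V} (hne : a ≠ b)
    (hnadj : ¬ Γ.Adj a b) : ¬ (pairSplit Gv hne hnadj).tree.IsBounded (full Γ Gv {a, b}) := by
  intro hbdd
  obtain ⟨_ | _, g, hg⟩ := Amalgam.exists_le_conjSubgroup_of_isBounded _ hbdd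
  · exact subset_of_full_le_conjSubgroup (S' := {a}ᶜ) hg (Set.mem_insert a {b}) rfl
  · exact subset_of_full_le_conjSubgroup (S' := {b}ᶜ) hg (Set.mem_insert_of_mem a rfl) rfl

theorem infinite_full_pair [∀ v, Nontrivial (Gv v)] {a b : V} (hne : a ≠ b)
    (hnadj : ¬ Γ.Adj a b) : Infinite (full Γ Gv {a, b}) := by
  rw [← not_finite_iff_infinite]
  exact fun _ ↦ not_isBounded_pairSplit (Gv := Gv) hne hnadj (TreeAction.isBounded_of_finite _)

/-! ### Acylindrical actions without separated pairs -/

variable {A : TreeAction (GraphProduct Γ Gv)}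

theorem isBounded_full_of_forall_adj (hA : A.Acylindrical) {S T : Set V}
    [Infinite (full Γ Gv T)] (hST : ∀ u ∈ S, ∀ v ∈ T, Γ.Adj u v) : A.IsBounded (full Γ Gv S) :=
  hA.isBounded_of_le_centralizer (full_le_centralizer hST) <|
    disjoint_full <| Set.disjoint_left.2 fun v hvS hvT ↦ Γ.irrefl (hST v hvS v hvT)

theorem isBounded_full_pair_of_not_adj (hA : A.Acylindrical)
    (hsep : ∀ u v, ¬ SeparatedPair Γ Gv u v) {u v : V} (hne : u ≠ v) (hnadj : ¬ Γ.Adj u v) :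
    A.IsBounded (full Γ Gv {u, v}) := by
  have : Infinite (full Γ Gv (Γ.neighborSet u ∩ Γ.neighborSet v)) :=
    not_finite_iff_infinite.1 fun hfin ↦ hsep u v ⟨hne, hnadj, hfin⟩
  refine isBounded_full_of_forall_adj hA (T := Γ.neighborSet u ∩ Γ.neighborSet v) ?_
  rintro w (rfl | rfl) z hz
  exacts [hz.1, hz.2]

variable [∀ v, Nontrivial (Gv v)]

theorem isBounded_full_singleton (hA : A.Acylindrical) (hsep : ∀ u v, ¬ SeparatedPair Γ Gv u v)
    {a b : V} (hne : a ≠ b) (hnadj : ¬ Γ.Adj a b) (v : V) : A.IsBounded (full Γ Gv {v}) := by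
  by_cases hv : ∃ w, v ≠ w ∧ ¬ Γ.Adj v w
  · obtain ⟨w, hvw, hvw_nadj⟩ := hv
    exact (isBounded_full_pair_of_not_adj hA hsep hvw hvw_nadj).mono (full_mono (by simp))
  · have hadj (w : V) (hvw : v ≠ w) : Γ.Adj v w := not_not.1 fun h ↦ hv ⟨w, hvw, h⟩
    have hva : v ≠ a := by
      rintro rfl
      exact hnadj (hadj b hne)
    have hvb : v ≠ b := by
      rintro rfl
      exact hnadj (hadj a hne.symm).symm
    have := infinite_full_pair (Gv := Gv) hne hnadj
    refine isBounded_full_of_forall_adj hA (T := {a, b}) ?_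
    rintro _ rfl w (rfl | rfl)
    exacts [hadj _ hva, hadj _ hvb]

theorem isBounded_full_of_finite (hA : A.Acylindrical) (hsep : ∀ u v, ¬ SeparatedPair Γ Gv u v)
    {a b : V} (hne : a ≠ b) (hnadj : ¬ Γ.Adj a b) {S : Set V} (hS : S.Finite) :
    A.IsBounded (full Γ Gv S) := by
  have := hS.to_subtype
  rw [← Set.iUnion_of_singleton_coe S, full_iUnion]
  refine TreeAction.isBounded_iSup_of_finite fun u v ↦ ?_
  have hsingle := isBounded_full_singleton hA hsep hne hnadj
  by_cases huv : (u : V) = v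
  · rw [huv, sup_idem]
    exact hsingle v
  by_cases hadj : Γ.Adj u v
  · refine (hsingle u).sup_of_le_centralizer (hsingle v) (full_le_centralizer ?_)
    rintro _ rfl _ rfl
    exact hadj
  · rw [← full_union]
    exact isBounded_full_pair_of_not_adj hA hsep huv hadj

theorem boundedOrbits (hA : A.Acylindrical) (hsep : ∀ u v, ¬ SeparatedPair Γ Gv u v)
    {a b : V} (hne : a ≠ b) (hnadj : ¬ Γ.Adj a b) : A.BoundedOrbits := by
  have htop : ⨆ v, full Γ Gv {a, b, v} = ⊤ := by
    rw [← full_iUnion, ← full_univ]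
    congr 1
    exact Set.iUnion_eq_univ_iff.2 fun v ↦ ⟨v, by simp⟩
  rw [← TreeAction.isBounded_top, ← htop]
  have := infinite_full_pair (Gv := Gv) hne hnadj
  refine hA.isBounded_iSup (K := full Γ Gv {a, b}) (fun v ↦ full_mono ?_) fun u v ↦ ?_
  · simp [Set.insert_subset_iff]
  · rw [← full_union]
    exact isBounded_full_of_finite hA hsep hne hnadj (Set.toFinite _)

theorem not_adj_of_distAtLeast_two {a b : V} (hab : Γ.distAtLeast 2 a b) : ¬ Γ.Adj a b := by
  intro hadj
  have hdist := hab.2.resolve_left (not_not.2 hadj.reachable)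
  rw [SimpleGraph.dist_eq_one_iff_adj.2 hadj] at hdist
  omega

end GraphProduct

theorem graphProduct_acylindricallyArboreal_iff_general {V : Type} (Γ : SimpleGraph V)
    (Gv : V → Type) [∀ v, Group (Gv v)] (hn : ∀ v, Nontrivial (Gv v)) (hdiam : Γ.diamAtLeast 2) :
    AcylindricallyArboreal (GraphProduct Γ Gv) ↔
      (¬ IsVirtuallyCyclic (GraphProduct Γ Gv) ∧
        ∃ a b : V, GraphProduct.SeparatedPair Γ Gv a b) := by
  constructor
  · rintro ⟨A, hA, hunbounded, hcyclic⟩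
    refine ⟨hcyclic, ?_⟩
    by_contra! hsep
    obtain ⟨a, b, hab⟩ := hdiam
    exact hunbounded <|
      GraphProduct.boundedOrbits hA hsep hab.1 (GraphProduct.not_adj_of_distAtLeast_two hab)
  · rintro ⟨hcyclic, a, b, hne, hnadj, _⟩
    refine ⟨(GraphProduct.pairSplit Gv hne hnadj).tree,
      GraphProduct.acylindrical_pairSplit hne hnadj, fun hbdd ↦ ?_, hcyclic⟩
    exact GraphProduct.not_isBounded_pairSplit hne hnadj
      (((TreeAction.isBounded_top _).2 hbdd).mono le_top)

/-- **Main theorem for graph products.** A non-degenerate graph product `G` over a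
finite simple graph `Γ` with `diam(Γ) ≥ 2` is acylindrically arboreal (admits a
non-elementary acylindrical action on a simplicial tree) if and only if `G` is not
virtually cyclic and `Γ` contains a pair of separated vertices. -/
theorem graphProduct_acylindricallyArboreal_iff {V : Type} [Fintype V]
    (Γ : SimpleGraph V) (Gv : V → Type) [∀ v, Group (Gv v)]
    (hnd : GraphProduct.NonDegenerate Gv) (hdiam : Γ.diamAtLeast 2) :
    AcylindricallyArboreal (GraphProduct Γ Gv) ↔
      (¬ IsVirtuallyCyclic (GraphProduct Γ Gv) ∧
        ∃ a b : V, GraphProduct.SeparatedPair Γ Gv a b) :=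
  graphProduct_acylindricallyArboreal_iff_general Γ Gv hnd.1 hdiam
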